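/- There exists a constant C > 0 such that the following holds (CATERPILLAR algorithm): for every tree T=(V,E) with n vertices, every valid initial configuration A with |H| ≥ c(T), every pebble p̄, and every target vertex t, there exists a plan f with |f| ≤ C·n·c(T) such that ρ(A,f)(p̄) = t; i.e., the motion planning problem on trees is always solvable with O(n·c) moves. -/

import Mathlib

/-!
A *caterpillar* is a connected set `S` of `c + 1` vertices, `c = c(T)`, all of which are holes
except for the one carrying the pebble `pb` (`Conn`, `Clear`). The pebble can go anywhere inside
`S` in at most `c` moves (`park`). A caterpillar is first formed around the pebble in at most
`c * n` moves (`gather`), and is then led along the path to the target `t`, each edge of which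
costs `O(c)` moves (`advance`, `follow`). Once `t ∈ S`, the pebble goes to `t`.

To annex a vertex `w` adjacent to `w' ∈ S`, the occupant of `w` is pushed through `S` to a vertex
`u` whose removal keeps `S` connected, while the pebble waits off the path from `w` to `u`
(`grab`). Taking for `u` the end of a longest path of `S` from `w'`, this is possible unless `S`
is itself a path with end `w'`. In that case the definition of `c(T)` provides a junction inside
the path `S` that is neither `w'` nor one of the last two vertices (`exists_junction`). The
caterpillar first gives up its last vertex for a neighbour `y` of the junction outside the path;
with the pebble hidden at `y`, it then gives up its new last vertex for `w`. If `T` is a path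
graph, no vertex is left outside of `S` (`card_le_of_isPathGraph`).
-/

namespace PMT

variable {V P H : Type}

/-- A configuration assigns to each pebble or hole a vertex, bijectively. -/
abbrev Config (P H V : Type) : Type := (P ⊕ H) ≃ V

/- Apply a single move `u → v`: applicable iff `(u,v)` is an edge and the occupant of `v`
is a hole; applying it swaps the occupants of `u` and `v`. -/
open Classical in
noncomputable def applyMove (G : SimpleGraph V) (A : Config P H V) (m : V × V) :
    Option (Config P H V) :=
  if G.Adj m.1 m.2 ∧ (A.symm m.2).isRight = true then
    some (A.trans (Equiv.swap m.1 m.2))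
  else
    none

/-- Apply a plan (finite list of moves) in order; defined (`some`) only when each
successive move is applicable. -/
noncomputable def applyPlan (G : SimpleGraph V) :
    Config P H V → List (V × V) → Option (Config P H V)
  | A, [] => some A
  | A, m :: f => (applyMove G A m).bind fun B => applyPlan G B f

/-- The degree of a vertex (number of neighbors). -/
noncomputable def deg (G : SimpleGraph V) (v : V) : ℕ := (G.neighborSet v).ncard

/-- A corridor: a (nontrivial) path whose endpoints have degree different from 2 and
whose internal vertices all have degree exactly 2. -/
def IsCorridor (G : SimpleGraph V) {a b : V} (p : G.Walk a b) : Prop :=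
  p.IsPath ∧ 1 ≤ p.length ∧ deg G a ≠ 2 ∧ deg G b ≠ 2 ∧
    ∀ x ∈ p.support, x ≠ a → x ≠ b → deg G x = 2

/-- `c₁(T)`: the maximum length of a corridor. -/
noncomputable def c1 (G : SimpleGraph V) : ℕ :=
  sSup {n | ∃ (a b : V) (p : G.Walk a b), IsCorridor G p ∧ p.length = n}

/-- `c₂(T)`: the maximum length of a corridor both of whose endpoints are junctions
(vertices of degree greater than 2); `0` if no such corridor exists. -/
noncomputable def c2 (G : SimpleGraph V) : ℕ :=
  sSup {n | ∃ (a b : V) (p : G.Walk a b),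
    IsCorridor G p ∧ 2 < deg G a ∧ 2 < deg G b ∧ p.length = n}

/-- A path graph: all vertices lie on a single path. -/
def IsPathGraph (G : SimpleGraph V) : Prop :=
  ∃ (a b : V) (p : G.Walk a b), p.IsPath ∧ ∀ x : V, x ∈ p.support

/- The constant `c(T)`: `c₁(T)` if `T` is a path graph,
`max (c₁(T)+1) (c₂(T)+2)` otherwise. -/
open Classical in
noncomputable def cT (G : SimpleGraph V) : ℕ :=
  if IsPathGraph G then c1 G else max (c1 G + 1) (c2 G + 2)

/-! ### Elementary transports of pebbles and holes -/

/-- Some plan with at most `k` moves leads from `A` to `B`. -/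
def Reach (G : SimpleGraph V) (A B : Config P H V) (k : ℕ) : Prop :=
  ∃ f : List (V × V), applyPlan G A f = some B ∧ f.length ≤ k

theorem applyPlan_append (G : SimpleGraph V) (f g : List (V × V)) :
    ∀ A : Config P H V,
      applyPlan G A (f ++ g) = (applyPlan G A f).bind fun B => applyPlan G B g := by
  induction f with
  | nil => intro A; simp [applyPlan]
  | cons m f ih =>
    intro A
    simp only [List.cons_append, applyPlan]
    cases applyMove G A m with
    | none => rfl
    | some B => simpa using ih B

theorem Reach.refl (G : SimpleGraph V) (A : Config P H V) (k : ℕ) : Reach G A A k :=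
  ⟨[], rfl, by simp⟩

theorem Reach.trans {G : SimpleGraph V} {A B D : Config P H V} {k l : ℕ}
    (h₁ : Reach G A B k) (h₂ : Reach G B D l) : Reach G A D (k + l) := by
  obtain ⟨f, hf, hfk⟩ := h₁
  obtain ⟨g, hg, hgl⟩ := h₂
  refine ⟨f ++ g, ?_, ?_⟩
  · rw [applyPlan_append, hf]; simpa using hg
  · rw [List.length_append]; omega

theorem Reach.mono {G : SimpleGraph V} {A B : Config P H V} {k l : ℕ}
    (h : Reach G A B k) (hkl : k ≤ l) : Reach G A B l := by
  obtain ⟨f, hf, hfk⟩ := h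
  exact ⟨f, hf, hfk.trans hkl⟩

open Classical in
theorem reach_move {G : SimpleGraph V} (A : Config P H V) {u v : V} (h : G.Adj u v)
    (hv : (A.symm v).isRight = true) :
    ∃ B : Config P H V, Reach G A B 1 ∧ B.symm v = A.symm u ∧ B.symm u = A.symm v ∧
      ∀ x, x ≠ u → x ≠ v → B.symm x = A.symm x := by
  refine ⟨A.trans (Equiv.swap u v), ⟨[(u, v)], ?_, by simp⟩, ?_, ?_, ?_⟩
  · have : applyMove G A (u, v) = some (A.trans (Equiv.swap u v)) := by
      unfold applyMove
      rw [if_pos ⟨h, hv⟩]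
    simp [applyPlan, this]
  · simp
  · simp
  · intro x hxu hxv
    simp [Equiv.swap_apply_of_ne_of_ne hxu hxv]

/-- The occupant of the first vertex of a path whose other vertices are holes can be moved to
the far end, leaving holes behind it. -/
theorem transport_forward {G : SimpleGraph V} {a b : V} (p : G.Walk a b) :
    p.IsPath → ∀ A : Config P H V,
      (∀ x ∈ p.support, x ≠ a → (A.symm x).isRight = true) →
      ∃ B : Config P H V, Reach G A B p.length ∧ B.symm b = A.symm a ∧
        (∀ x ∈ p.support, x ≠ b → (B.symm x).isRight = true) ∧
        ∀ x, x ∉ p.support → B.symm x = A.symm x := by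
  induction p with
  | nil =>
    intro _ A _
    exact ⟨A, Reach.refl G A _, rfl, by simp, fun _ _ => rfl⟩
  | @cons a d b h q ih =>
    intro hp A hA
    rw [SimpleGraph.Walk.cons_isPath_iff] at hp
    have had : a ≠ d := h.ne
    have hd : (A.symm d).isRight = true := hA d (by simp) had.symm
    obtain ⟨A', hr, h1, h2, h3⟩ := reach_move A h hd
    have hne : ∀ x ∈ q.support, x ≠ a := fun x hx hxa => hp.2 (hxa ▸ hx)
    obtain ⟨B, hB, hb, hB1, hB2⟩ := ih hp.1 A' (by
      intro x hx hxd
      rw [h3 x (hne x hx) hxd]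
      exact hA x (by simp [hx]) (hne x hx))
    refine ⟨B, (hr.trans hB).mono (by simp; omega), hb.trans h1, ?_, ?_⟩
    · intro x hx hxb
      rw [SimpleGraph.Walk.support_cons, List.mem_cons] at hx
      by_cases hxq : x ∈ q.support
      · exact hB1 x hxq hxb
      · obtain rfl : x = a := by tauto
        rw [hB2 x hxq, h2]; exact hd
    · intro x hx
      rw [SimpleGraph.Walk.support_cons, List.mem_cons, not_or] at hx
      rw [hB2 x hx.2]
      refine h3 x hx.1 ?_
      rintro rfl
      exact hx.2 q.start_mem_support

/-- A hole at the end of a path can be brought to its first vertex, by shifting every other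
occupant of the path by one step. -/
theorem transport_hole {G : SimpleGraph V} {a b : V} (p : G.Walk a b) :
    p.IsPath → ∀ A : Config P H V, (A.symm b).isRight = true →
      ∃ B : Config P H V, Reach G A B p.length ∧ (B.symm a).isRight = true ∧
        ∀ x, x ∉ p.support → B.symm x = A.symm x := by
  induction p with
  | nil =>
    intro _ A hA
    exact ⟨A, Reach.refl G A _, hA, fun _ _ => rfl⟩
  | @cons a d b h q ih =>
    intro hp A hA
    rw [SimpleGraph.Walk.cons_isPath_iff] at hp
    obtain ⟨A', hr, hd, hA'⟩ := ih hp.1 A hA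
    obtain ⟨B, hB, h1, h2, h3⟩ := reach_move A' h hd
    refine ⟨B, (hr.trans hB).mono (by simp), by rw [h2]; exact hd, ?_⟩
    intro x hx
    rw [SimpleGraph.Walk.support_cons, List.mem_cons, not_or] at hx
    rw [h3 x hx.1 ?_, hA' x hx.2]
    rintro rfl
    exact hx.2 q.start_mem_support

/-! ### The caterpillar and its elementary displacements -/

/-- `S` is connected: any two of its vertices are joined by a walk inside `S`. -/
def Conn (G : SimpleGraph V) (S : Finset V) : Prop :=
  ∀ a ∈ S, ∀ b ∈ S, ∃ p : G.Walk a b, ∀ x ∈ p.support, x ∈ S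

/-- In configuration `A` the pebble `pb` sits at `z ∈ S` and all other vertices of `S` are
occupied by holes. -/
def Clear (A : Config P H V) (pb : P) (S : Finset V) (z : V) : Prop :=
  z ∈ S ∧ A.symm z = Sum.inl pb ∧ ∀ v ∈ S, v ≠ z → (A.symm v).isRight = true

theorem conn_of_center {G : SimpleGraph V} {S : Finset V} (m : V)
    (h : ∀ a ∈ S, ∃ p : G.Walk m a, ∀ x ∈ p.support, x ∈ S) : Conn G S := by
  intro a ha b hb
  obtain ⟨p, hp⟩ := h a ha
  obtain ⟨q, hq⟩ := h b hb
  refine ⟨p.reverse.append q, fun x hx => ?_⟩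
  rw [SimpleGraph.Walk.mem_support_append_iff, SimpleGraph.Walk.support_reverse,
    List.mem_reverse] at hx
  exact hx.elim (hp x) (hq x)

open Classical in
theorem length_lt_card {G : SimpleGraph V} {a b : V} {p : G.Walk a b} (hp : p.IsPath)
    {S : Finset V} (h : ∀ x ∈ p.support, x ∈ S) : p.length < S.card := by
  have h1 : p.support.toFinset.card = p.length + 1 := by
    rw [List.toFinset_card_of_nodup hp.support_nodup, SimpleGraph.Walk.length_support]
  have h2 : p.support.toFinset ⊆ S := fun x hx => h x (by simpa using hx)
  have := Finset.card_le_card h2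
  omega

theorem Conn.exists_path {G : SimpleGraph V} {S : Finset V} (hS : Conn G S) {a b : V}
    (ha : a ∈ S) (hb : b ∈ S) : ∃ p : G.Walk a b, p.IsPath ∧ ∀ x ∈ p.support, x ∈ S := by
  classical
  obtain ⟨p, hp⟩ := hS a ha b hb
  exact ⟨p.bypass, p.bypass_isPath, fun x hx => hp x (p.support_bypass_subset_support hx)⟩

/-- The pebble moves freely inside the caterpillar. -/
theorem park {G : SimpleGraph V} {A : Config P H V} {pb : P} {S : Finset V} {z z' : V}
    (hS : Conn G S) (hA : Clear A pb S z) (hz' : z' ∈ S) :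
    ∃ B : Config P H V, Reach G A B (S.card - 1) ∧ Clear B pb S z' := by
  obtain ⟨hz, hpb, hh⟩ := hA
  obtain ⟨p, hp, hpS⟩ := hS.exists_path hz hz'
  obtain ⟨B, hB, hb, hB1, hB2⟩ := transport_forward p hp A (fun x hx hxz => hh x (hpS x hx) hxz)
  have hl := length_lt_card hp hpS
  refine ⟨B, hB.mono (by omega), hz', hb.trans hpb, fun v hv hvz => ?_⟩
  by_cases hvp : v ∈ p.support
  · exact hB1 v hvp hvz
  · rw [hB2 v hvp]
    exact hh v hv (fun h => hvp (h ▸ p.start_mem_support))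

open Classical in
/-- The caterpillar gains a vertex `w` and gives up a vertex `u`: the occupant of `w` is moved
to `u` through holes of `S`, along a walk avoiding the place `z` of the pebble. -/
theorem grab {G : SimpleGraph V} {A : Config P H V} {pb : P} {S : Finset V} {z w u : V}
    (hA : Clear A pb S z) (hw : w ∉ S) (R : G.Walk w u)
    (hR : ∀ x ∈ R.support, x = w ∨ (x ∈ S ∧ x ≠ z)) (huw : u ≠ w) :
    ∃ B : Config P H V, Reach G A B S.card ∧ Clear B pb (insert w (S.erase u)) z := by
  obtain ⟨hz, hpb, hh⟩ := hA
  have hR' : ∀ x ∈ R.bypass.support, x = w ∨ (x ∈ S ∧ x ≠ z) :=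
    fun x hx => hR x (R.support_bypass_subset_support hx)
  obtain ⟨B, hB, hb, hB1, hB2⟩ := transport_forward R.bypass R.bypass_isPath A
    (fun x hx hxw => by
      rcases hR' x hx with h | h
      · exact absurd h hxw
      · exact hh x h.1 h.2)
  have hl := length_lt_card R.bypass_isPath (S := insert w S) (fun x hx => by
    rcases hR' x hx with h | h
    · simp [h]
    · simp [h.1])
  rw [Finset.card_insert_of_notMem hw] at hl
  have hzR : z ∉ R.bypass.support := fun h => by
    rcases hR' z h with h | h
    · exact hw (h ▸ hz)
    · exact h.2 rfl
  have hzu : z ≠ u := fun h => hzR (h ▸ R.bypass.end_mem_support)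
  refine ⟨B, hB.mono (by omega), by simp [hz, hzu], (hB2 z hzR).trans hpb, fun v hv hvz => ?_⟩
  rw [Finset.mem_insert, Finset.mem_erase] at hv
  by_cases hvR : v ∈ R.bypass.support
  · refine hB1 v hvR ?_
    rintro rfl
    rcases hv with h | h
    · exact huw h
    · exact h.1 rfl
  · rw [hB2 v hvR]
    rcases hv with rfl | h
    · exact absurd R.bypass.start_mem_support hvR
    · exact hh v h.2 hvz

/-! ### Paths in trees and corridors -/

/-- The segment of a path between two indices. -/
theorem exists_segment {G : SimpleGraph V} {s t : V} {W : G.Walk s t} (hW : W.IsPath) (a : ℕ) :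
    ∀ b, a ≤ b → b ≤ W.length →
      ∃ p : G.Walk (W.getVert a) (W.getVert b), p.IsPath ∧ p.length = b - a ∧
        ∀ x ∈ p.support, ∃ k, a ≤ k ∧ k ≤ b ∧ x = W.getVert k := by
  intro b hab
  induction b, hab using Nat.le_induction with
  | base =>
    intro _
    exact ⟨.nil, by simp, by simp, fun x hx => ⟨a, le_rfl, le_rfl, by simpa using hx⟩⟩
  | succ b hab ih =>
    intro hb
    obtain ⟨p, hp, hl, hs⟩ := ih (by omega)
    have hadj : G.Adj (W.getVert b) (W.getVert (b + 1)) := W.adj_getVert_succ (by omega)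
    refine ⟨p.concat hadj, ?_, ?_, ?_⟩
    · refine hp.concat ?_ hadj
      intro h
      obtain ⟨k, _, hkb, hk⟩ := hs _ h
      have := hW.getVert_injOn (by simpa using hb) (by simp; omega) hk
      omega
    · rw [SimpleGraph.Walk.length_concat]; omega
    · intro x hx
      rw [SimpleGraph.Walk.support_concat, List.mem_append] at hx
      rcases hx with hx | hx
      · obtain ⟨k, h1, h2, h3⟩ := hs x hx
        exact ⟨k, h1, by omega, h3⟩
      · exact ⟨b + 1, by omega, le_rfl, by simpa using hx⟩

/-- Paths of a forest have no chords. -/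
theorem no_chord {G : SimpleGraph V} (hG : G.IsAcyclic) {s t : V} {W : G.Walk s t}
    (hW : W.IsPath) {i j : ℕ} (hi : i ≤ W.length) (hj : j ≤ W.length)
    (h : G.Adj (W.getVert i) (W.getVert j)) : j = i + 1 ∨ i = j + 1 := by
  have key : ∀ i j, i ≤ j → j ≤ W.length → G.Adj (W.getVert i) (W.getVert j) → j = i + 1 := by
    intro i j hij hj h
    obtain ⟨p, hp, hl, -⟩ := exists_segment hW i j hij hj
    have hq : (SimpleGraph.Walk.cons h .nil).IsPath := by
      simp [SimpleGraph.Walk.cons_isPath_iff, h.ne]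
    have := congrArg (fun q : G.Path _ _ => q.1.length)
      ((hG.subsingleton_path _ _).elim ⟨p, hp⟩ ⟨_, hq⟩)
    simp [hl] at this
    omega
  rcases le_total i j with hij | hij
  · exact Or.inl (key i j hij hj h)
  · exact Or.inr (key j i hij hi h.symm)

theorem deg_ge_two [Fintype V] {G : SimpleGraph V} {x y z : V} (hy : G.Adj x y) (hz : G.Adj x z)
    (hyz : y ≠ z) : 2 ≤ deg G x := by
  rw [deg, ← Set.ncard_pair hyz]
  refine Set.ncard_le_ncard ?_ (Set.toFinite _)
  rintro v (rfl | rfl)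
  exacts [hy, hz]

theorem bddAbove_of_path [Fintype V] {G : SimpleGraph V} {s : Set ℕ}
    (h : ∀ n ∈ s, ∃ (a b : V) (p : G.Walk a b), p.IsPath ∧ p.length = n) : BddAbove s := by
  refine ⟨Fintype.card V, fun n hn => ?_⟩
  obtain ⟨a, b, p, hp, rfl⟩ := h n hn
  exact hp.length_lt.le

theorem IsCorridor.length_le_c1 [Fintype V] {G : SimpleGraph V} {a b : V} {p : G.Walk a b}
    (hp : IsCorridor G p) : p.length ≤ c1 G :=
  le_csSup (bddAbove_of_path fun _ ⟨a, b, p, hp, hl⟩ => ⟨a, b, p, hp.1, hl⟩) ⟨a, b, p, hp, rfl⟩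

theorem IsCorridor.length_le_c2 [Fintype V] {G : SimpleGraph V} {a b : V} {p : G.Walk a b}
    (hp : IsCorridor G p) (ha : 2 < deg G a) (hb : 2 < deg G b) : p.length ≤ c2 G :=
  le_csSup (bddAbove_of_path fun _ ⟨a, b, p, hp, _, _, hl⟩ => ⟨a, b, p, hp.1, hl⟩)
    ⟨a, b, p, hp, ha, hb, rfl⟩

/-- A path whose internal vertices have degree `2` can be prolonged at an endpoint of
degree `2`. -/
theorem prolong [Fintype V] {G : SimpleGraph V} (hG : G.IsAcyclic) {a b : V} (p : G.Walk a b)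
    (hp : p.IsPath) (hi : ∀ x ∈ p.support, x ≠ a → x ≠ b → deg G x = 2) (hb : deg G b = 2) :
    ∃ (y : V) (q : G.Walk a y), q.IsPath ∧ q.length = p.length + 1 ∧
      ∀ x ∈ q.support, x ≠ a → x ≠ y → deg G x = 2 := by
  obtain ⟨y, hy, hne⟩ := Set.exists_ne_of_one_lt_ncard
    (show 1 < (G.neighborSet b).ncard by rw [deg] at hb; omega) (p.getVert (p.length - 1))
  have hby : G.Adj b y := hy
  have hyp : y ∉ p.support := by
    intro h
    obtain ⟨j, rfl, hj⟩ := SimpleGraph.Walk.mem_support_iff_exists_getVert.1 h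
    have := no_chord hG hp le_rfl hj (by rwa [SimpleGraph.Walk.getVert_length])
    have hjl : j = p.length - 1 := by omega
    exact hne (by rw [hjl])
  refine ⟨y, p.concat hby, hp.concat hyp hby, by simp, fun x hx hxa hxy => ?_⟩
  rw [SimpleGraph.Walk.support_concat, List.mem_append] at hx
  have hx : x ∈ p.support := by
    rcases hx with hx | hx
    · exact hx
    · exact absurd (by simpa using hx) hxy
  by_cases hxb : x = b
  · rw [hxb, hb]
  · exact hi x hx hxa hxb

/-- A path with internal vertices of degree `2` has length at most `c₁`, being contained in a
corridor. The induction is on a bound `k` for the number of vertices off the path. -/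
theorem length_le_c1 [Fintype V] {G : SimpleGraph V} (hG : G.IsAcyclic) :
    ∀ (k : ℕ) {a b : V} (p : G.Walk a b), p.IsPath →
      (∀ x ∈ p.support, x ≠ a → x ≠ b → deg G x = 2) → 1 ≤ p.length →
      Fintype.card V ≤ p.length + k → p.length ≤ c1 G := by
  intro k
  induction k with
  | zero =>
    intro a b p hp _ _ hk
    have := hp.length_lt
    omega
  | succ k ih =>
    intro a b p hp hi h1 hk
    by_cases hb : deg G b = 2
    · obtain ⟨y, q, hq, hl, hqi⟩ := prolong hG p hp hi hb
      have := ih q hq hqi (by omega) (by omega)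
      omega
    by_cases ha : deg G a = 2
    · obtain ⟨y, q, hq, hl, hqi⟩ := prolong hG p.reverse hp.reverse
        (fun x hx hxb hxa => hi x (by simpa using hx) hxa hxb) ha
      rw [SimpleGraph.Walk.length_reverse] at hl
      have := ih q hq hqi (by omega) (by omega)
      omega
    exact IsCorridor.length_le_c1 ⟨hp, h1, ha, hb, hi⟩

/-- In a path graph `c(T) = c₁(T) ≥ n - 1`, so that a caterpillar with `c(T) + 1` vertices covers
the whole graph. -/
theorem card_le_of_isPathGraph [Fintype V] {G : SimpleGraph V} (hG : G.IsAcyclic)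
    (h : IsPathGraph G) : Fintype.card V ≤ c1 G + 1 := by
  classical
  obtain ⟨a, b, p, hp, hall⟩ := h
  have hcard : Fintype.card V ≤ p.length + 1 := by
    rw [← SimpleGraph.Walk.length_support, ← List.toFinset_card_of_nodup hp.support_nodup]
    exact Finset.card_le_card fun x _ => by simpa using hall x
  by_cases h1 : 1 ≤ p.length
  · refine hcard.trans (Nat.succ_le_succ (length_le_c1 hG (Fintype.card V) p hp ?_ h1 (by omega)))
    intro x hx hxa hxb
    obtain ⟨k, rfl, hk⟩ := SimpleGraph.Walk.mem_support_iff_exists_getVert.1 hx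
    have hk0 : k ≠ 0 := by rintro rfl; simp at hxa
    have hkl : k ≠ p.length := by rintro rfl; simp at hxb
    have hne : p.getVert (k - 1) ≠ p.getVert (k + 1) := fun h => by
      have := hp.getVert_injOn (by simp; omega) (by simp; omega) h
      omega
    have hset : G.neighborSet (p.getVert k) = {p.getVert (k - 1), p.getVert (k + 1)} := by
      ext y
      constructor
      · intro hy
        obtain ⟨j, rfl, hj⟩ := SimpleGraph.Walk.mem_support_iff_exists_getVert.1 (hall y)
        rcases no_chord hG hp hk hj hy with rfl | rfl
        · exact Or.inr rfl
        · exact Or.inl rfl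
      · rintro (rfl | rfl)
        · have := p.adj_getVert_succ (i := k - 1) (by omega)
          rw [Nat.sub_add_cancel (by omega)] at this
          exact this.symm
        · exact p.adj_getVert_succ (by omega)
    rw [deg, hset, Set.ncard_pair hne]
  · omega

/-- Let `W = W₀, …, W_{c+1}` be a path with `c = c(T)`, in a tree that is not a path graph. Then
one of `W₂, …, W_{c-1}` is a junction, and so has a neighbour `y` off `W`. Otherwise either `W₁`
or `W_c` has degree `2`, and `W₀, …, W_c` or `W₁, …, W_{c+1}` lies in a corridor, of length at
least `c > c₁`; or both are junctions and `W₁, …, W_c` is a corridor of length `c - 1 > c₂`. -/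
theorem exists_junction [Fintype V] {G : SimpleGraph V} (hG : G.IsAcyclic)
    (hP : ¬ IsPathGraph G) {w u : V} (W : G.Walk w u) (hW : W.IsPath)
    (hl : W.length = cT G + 1) :
    ∃ i, 2 ≤ i ∧ i + 1 ≤ cT G ∧ ∃ y, G.Adj (W.getVert i) y ∧ y ∉ W.support := by
  have hc : cT G = max (c1 G + 1) (c2 G + 2) := by rw [cT, if_neg hP]
  generalize cT G = c at *
  have hc1 : c1 G + 1 ≤ c := by omega
  have hc2 : c2 G + 2 ≤ c := by omega
  have hinj : ∀ i j, i ≤ c + 1 → j ≤ c + 1 → W.getVert i = W.getVert j → i = j :=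
    fun i j hi hj h => hW.getVert_injOn (by simp; omega) (by simp; omega) h
  have hdeg : ∀ i, 1 ≤ i → i ≤ c → 2 ≤ deg G (W.getVert i) := by
    intro i h1 h2
    have hb := W.adj_getVert_succ (i := i - 1) (by omega)
    rw [Nat.sub_add_cancel h1] at hb
    refine deg_ge_two hb.symm (W.adj_getVert_succ (i := i) (by omega)) fun h => ?_
    have := hinj _ _ (by omega) (by omega) h
    omega
  -- a segment with internal vertices of degree `2` is shorter than `c`
  have hseg : ∀ a b, a + c = b → b ≤ c + 1 →
      ¬ ∀ k, a < k → k < b → deg G (W.getVert k) = 2 := by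
    intro a b hab hb h
    obtain ⟨p, hp, hpl, hps⟩ := exists_segment hW a b (by omega) (by omega)
    have := length_le_c1 hG (Fintype.card V) p hp (fun x hx hxa hxb => by
      obtain ⟨k, h1, h2, rfl⟩ := hps x hx
      have : k ≠ a := by rintro rfl; exact hxa rfl
      have : k ≠ b := by rintro rfl; exact hxb rfl
      exact h k (by omega) (by omega)) (by omega) (by omega)
    omega
  have hex : ∃ i, 2 ≤ i ∧ i + 1 ≤ c ∧ deg G (W.getVert i) ≠ 2 := by
    by_contra! hno
    have h1 : deg G (W.getVert 1) ≠ 2 := fun h1 => hseg 0 c (by omega) (by omega) fun k hk hkc => by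
      rcases Nat.lt_or_ge k 2 with hk2 | hk2
      · obtain rfl : k = 1 := by omega
        exact h1
      · exact hno k hk2 hkc
    have hcd : deg G (W.getVert c) ≠ 2 := fun h1 => hseg 1 (c + 1) (by omega) (by omega)
      fun k hk hkc => by
        rcases Nat.lt_or_ge k c with hk2 | hk2
        · exact hno k hk hk2
        · obtain rfl : k = c := by omega
          exact h1
    have hd1 := hdeg 1 le_rfl (by omega)
    have hdc := hdeg c (by omega) le_rfl
    obtain ⟨p, hp, hpl, hps⟩ := exists_segment hW 1 c (by omega) (by omega)
    have := IsCorridor.length_le_c2 (p := p) ⟨hp, by omega, h1, hcd, fun x hx hxa hxb => by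
      obtain ⟨k, h1, h2, rfl⟩ := hps x hx
      have : k ≠ 1 := by rintro rfl; exact hxa rfl
      have : k ≠ c := by rintro rfl; exact hxb rfl
      exact hno k (by omega) (by omega)⟩ (by omega) (by omega)
    omega
  obtain ⟨i, h2, hic, hd⟩ := hex
  refine ⟨i, h2, hic, ?_⟩
  have hlt : ({W.getVert (i - 1), W.getVert (i + 1)} : Set V).ncard
      < (G.neighborSet (W.getVert i)).ncard := by
    have := hdeg i (by omega) (by omega)
    have := Set.ncard_insert_le (W.getVert (i - 1)) {W.getVert (i + 1)}
    rw [Set.ncard_singleton] at this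
    rw [deg] at *
    omega
  obtain ⟨y, hy, hyn⟩ := Set.exists_mem_notMem_of_ncard_lt_ncard hlt
  refine ⟨y, hy, fun hyW => hyn ?_⟩
  obtain ⟨j, rfl, hj⟩ := SimpleGraph.Walk.mem_support_iff_exists_getVert.1 hyW
  rcases no_chord hG hW (by omega) hj hy with rfl | rfl
  · exact Or.inr rfl
  · exact Or.inl rfl

/-! ### Advancing the caterpillar by one vertex -/

/-- A caterpillar with `c(T) + 1` vertices can be moved so as to occupy an adjacent vertex `w`, in
`O(c(T))` moves. If some vertex of `S` is off a longest path of `S` from `w'`, the pebble hides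
there and the far end of that path is exchanged for `w`. Otherwise `S` is a path ending at `w'`,
and its two vertices farthest from `w'` are exchanged for `w` and for a neighbour `y` of an inner
junction of the path, `y` being the hiding place. -/
theorem advance [Fintype V] {G : SimpleGraph V} (hG : G.IsAcyclic)
    {A : Config P H V} {pb : P} {S : Finset V} {z w w' : V} (hS : Conn G S)
    (hA : Clear A pb S z) (hcard : S.card = cT G + 1) (hw' : w' ∈ S) (hw : w ∉ S)
    (hadj : G.Adj w w') :
    ∃ (B : Config P H V) (S' : Finset V) (z' : V), Reach G A B (5 * cT G) ∧ Conn G S' ∧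
      Clear B pb S' z' ∧ S'.card = cT G + 1 ∧ w ∈ S' := by
  classical
  have hP : ¬ IsPathGraph G := fun hP => by
    have h1 := card_le_of_isPathGraph hG hP
    have h2 : cT G = c1 G := by rw [cT, if_pos hP]
    have h3 := Finset.card_le_univ (insert w S)
    rw [Finset.card_insert_of_notMem hw] at h3
    omega
  have hc2 : 2 ≤ cT G := by rw [cT, if_neg hP]; omega
  -- `Q` is a longest path inside `S` starting at `w'`
  obtain ⟨u, Q, hQ, hQS, hmax⟩ : ∃ (u : V) (Q : G.Walk w' u), Q.IsPath ∧
      (∀ x ∈ Q.support, x ∈ S) ∧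
      ∀ (v : V) (q : G.Walk w' v), q.IsPath → (∀ x ∈ q.support, x ∈ S) →
        q.length ≤ Q.length := by
    let s : Set ℕ := {n | ∃ (u : V) (Q : G.Walk w' u), Q.IsPath ∧
      (∀ x ∈ Q.support, x ∈ S) ∧ Q.length = n}
    have hb : BddAbove s := bddAbove_of_path fun _ ⟨u, Q, h, _, hl⟩ => ⟨w', u, Q, h, hl⟩
    have hne : s.Nonempty := ⟨0, w', .nil, by simp, by simpa using hw', rfl⟩
    obtain ⟨u, Q, h1, h2, h3⟩ := Nat.sSup_mem hne hb
    exact ⟨u, Q, h1, h2, fun v q h4 h5 => h3 ▸ le_csSup hb ⟨v, q, h4, h5, rfl⟩⟩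
  have hwQ : w ∉ Q.support := fun h => hw (hQS w h)
  have huS : u ∈ S := hQS u Q.end_mem_support
  have huw : u ≠ w := fun h => hw (h ▸ huS)
  by_cases hall : ∀ x ∈ S, x ∈ Q.support
  · -- `S` is the vertex set of `Q`
    have hQl : Q.length = cT G := by
      have h1 : Q.support.toFinset = S := by
        ext x
        simp only [List.mem_toFinset]
        exact ⟨hQS x, hall x⟩
      have h2 := List.toFinset_card_of_nodup hQ.support_nodup
      rw [h1, SimpleGraph.Walk.length_support] at h2
      omega
    obtain ⟨W, hWdef⟩ : ∃ W : G.Walk w u, W = .cons hadj Q := ⟨_, rfl⟩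
    have hW : W.IsPath := by
      rw [hWdef, SimpleGraph.Walk.cons_isPath_iff]; exact ⟨hQ, hwQ⟩
    have hWl : W.length = cT G + 1 := by rw [hWdef]; simp [hQl]
    have hWS : ∀ x, x ∈ S ↔ ∃ k, 1 ≤ k ∧ k ≤ cT G + 1 ∧ W.getVert k = x := by
      intro x
      constructor
      · intro hx
        obtain ⟨j, rfl, hj⟩ := SimpleGraph.Walk.mem_support_iff_exists_getVert.1 (hall x hx)
        exact ⟨j + 1, by omega, by omega, by rw [hWdef]; simp⟩
      · rintro ⟨k, h1, h2, rfl⟩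
        obtain ⟨j, rfl⟩ : ∃ j, k = j + 1 := ⟨k - 1, by omega⟩
        rw [hWdef, SimpleGraph.Walk.getVert_cons_succ]
        exact hQS _ (Q.getVert_mem_support j)
    have hW0 : W.getVert 0 = w := by simp
    have hW1 : W.getVert 1 = w' := by rw [hWdef]; simp
    have hWe : W.getVert (cT G + 1) = u := by rw [← hWl]; simp
    have hinj : ∀ i j, i ≤ cT G + 1 → j ≤ cT G + 1 → W.getVert i = W.getVert j → i = j :=
      fun i j hi hj h => hW.getVert_injOn (by simp; omega) (by simp; omega) h
    obtain ⟨i, hi2, hic, y, hiy, hy⟩ := exists_junction hG hP W hW hWl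
    generalize cT G = c at *
    have hyW : ∀ k, W.getVert k ≠ y := fun k h => hy (h ▸ W.getVert_mem_support k)
    have hyS : y ∉ S := fun h => by
      obtain ⟨k, _, _, h⟩ := (hWS y).1 h
      exact hyW k h
    have hyw : y ≠ w := fun h => hyW 0 (hW0.trans h.symm)
    -- the caterpillar shrinks by `u` and gains `y`
    obtain ⟨A₁, hr₁, hA₁⟩ := park hS hA hw'
    obtain ⟨p, -, -, hp⟩ := exists_segment hW i (c + 1) (by omega) (by omega)
    obtain ⟨A₂, hr₂, hA₂⟩ := grab (u := W.getVert (c + 1)) hA₁ hyS (.cons hiy.symm p) (by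
      intro x hx
      rw [SimpleGraph.Walk.support_cons, List.mem_cons] at hx
      refine hx.imp id fun hx => ?_
      obtain ⟨k, h1, h2, rfl⟩ := hp x hx
      refine ⟨(hWS _).2 ⟨k, by omega, h2, rfl⟩, fun h => ?_⟩
      have := hinj k 1 h2 (by omega) (h.trans hW1.symm)
      omega) (hyW _)
    have hmem₁ : ∀ x, x ∈ insert y (S.erase (W.getVert (c + 1))) ↔
        x = y ∨ ∃ k, 1 ≤ k ∧ k ≤ c ∧ W.getVert k = x := by
      intro x
      rw [Finset.mem_insert, Finset.mem_erase, hWS]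
      refine or_congr_right ⟨?_, ?_⟩
      · rintro ⟨hne, k, h1, h2, rfl⟩
        exact ⟨k, h1, by have : k ≠ c + 1 := (fun h => hne (by rw [h])); omega, rfl⟩
      · rintro ⟨k, h1, h2, rfl⟩
        refine ⟨fun h => ?_, k, h1, by omega, rfl⟩
        have := hinj _ _ (by omega) le_rfl h
        omega
    have hcard₁ : (insert y (S.erase (W.getVert (c + 1)))).card = c + 1 := by
      rw [Finset.card_insert_of_notMem (by simp [hyS]), Finset.card_erase_of_mem (by rwa [hWe])]
      omega
    have hw₁ : w ∉ insert y (S.erase (W.getVert (c + 1))) := by simp [hyw.symm, hw]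
    generalize insert y (S.erase (W.getVert (c + 1))) = S₁ at *
    have hconn : ∀ (a b : ℕ) (S' : Finset V), a ≤ i → i ≤ b → b ≤ c + 1 →
        (∀ x, x ∈ S' ↔ x = y ∨ ∃ k, a ≤ k ∧ k ≤ b ∧ W.getVert k = x) → Conn G S' := by
      intro a b S' hai hib hb hS'
      refine conn_of_center (W.getVert a) fun x hx => ?_
      rcases (hS' x).1 hx with rfl | ⟨k, h1, h2, rfl⟩
      · obtain ⟨q, -, -, hq⟩ := exists_segment hW a i hai (by omega)
        refine ⟨q.concat hiy, fun v hv => ?_⟩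
        rw [SimpleGraph.Walk.support_concat, List.mem_append] at hv
        rcases hv with hv | hv
        · obtain ⟨k, h1, h2, rfl⟩ := hq v hv
          exact (hS' _).2 (Or.inr ⟨k, h1, by omega, rfl⟩)
        · exact (hS' _).2 (Or.inl (by simpa using hv))
      · obtain ⟨q, -, -, hq⟩ := exists_segment hW a k h1 (by omega)
        refine ⟨q, fun v hv => ?_⟩
        obtain ⟨l, h3, h4, rfl⟩ := hq v hv
        exact (hS' _).2 (Or.inr ⟨l, h3, by omega, rfl⟩)
    -- the pebble hides at `y`, and `w` is exchanged for the last vertex of the path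
    obtain ⟨A₃, hr₃, hA₃⟩ := park (hconn 1 c S₁ (by omega) (by omega) (by omega) hmem₁) hA₂
      ((hmem₁ y).2 (Or.inl rfl))
    obtain ⟨p', -, -, hp'⟩ := exists_segment hW 0 c (by omega) (by omega)
    have hwc : W.getVert c ≠ W.getVert 0 := fun h => by
      have := hinj _ _ (by omega) (by omega) h
      omega
    obtain ⟨A₄, hr₄, hA₄⟩ := grab (w := W.getVert 0) (u := W.getVert c) hA₃ (by rwa [hW0]) p' (by
      intro x hx
      obtain ⟨k, h1, h2, rfl⟩ := hp' x hx
      rcases Nat.eq_zero_or_pos k with rfl | hk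
      · exact Or.inl rfl
      · exact Or.inr ⟨(hmem₁ _).2 (Or.inr ⟨k, hk, h2, rfl⟩), hyW k⟩) hwc
    refine ⟨A₄, _, y, (((hr₁.trans hr₂).trans hr₃).trans hr₄).mono ?_,
      hconn 0 (c - 1) _ (by omega) (by omega) (by omega) ?_, hA₄, ?_, ?_⟩
    · omega
    · intro x
      rw [Finset.mem_insert, Finset.mem_erase, hmem₁]
      constructor
      · rintro (rfl | ⟨hne, h | ⟨k, h1, h2, rfl⟩⟩)
        · exact Or.inr ⟨0, le_rfl, by omega, rfl⟩
        · exact Or.inl h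
        · exact Or.inr ⟨k, by omega, by
            have : k ≠ c := (fun h => hne (by rw [h])); omega, rfl⟩
      · rintro (rfl | ⟨k, h1, h2, rfl⟩)
        · exact Or.inr ⟨(hyW c).symm, Or.inl rfl⟩
        · rcases Nat.eq_zero_or_pos k with rfl | hk
          · exact Or.inl rfl
          · refine Or.inr ⟨fun h => ?_, Or.inr ⟨k, hk, by omega, rfl⟩⟩
            have := hinj _ _ (by omega) (by omega) h
            omega
    · rw [hW0, Finset.card_insert_of_notMem (by simp [hw₁]), Finset.card_erase_of_mem
        ((hmem₁ _).2 (Or.inr ⟨c, by omega, le_rfl, rfl⟩))]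
      omega
    · simp [hW0]
  · push Not at hall
    obtain ⟨v, hvS, hvQ⟩ := hall
    obtain ⟨A₁, hr₁, hA₁⟩ := park hS hA hvS
    obtain ⟨A₂, hr₂, hA₂⟩ := grab hA₁ hw (.cons hadj Q) (by
      intro x hx
      rw [SimpleGraph.Walk.support_cons, List.mem_cons] at hx
      exact hx.imp id fun hx => ⟨hQS x hx, fun h => hvQ (h ▸ hx)⟩) huw
    -- every path in `S` from `w'` to a vertex other than `u` avoids `u`, by maximality of `Q`
    have hpath : ∀ a ∈ S, a ≠ u →
        ∃ p : G.Walk w' a, ∀ x ∈ p.support, x ∈ S ∧ x ≠ u := by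
      intro a ha hau
      obtain ⟨p, hp, hpS⟩ := hS.exists_path hw' ha
      refine ⟨p, fun x hx => ⟨hpS x hx, ?_⟩⟩
      rintro rfl
      have h1 := congrArg (fun q : G.Path _ _ => q.1.length)
        ((hG.subsingleton_path _ _).elim ⟨p.takeUntil x hx, hp.takeUntil hx⟩ ⟨Q, hQ⟩)
      have h2 := SimpleGraph.Walk.length_takeUntil_lt_length hx hau.symm
      have h3 := hmax a p hp hpS
      simp only at h1
      omega
    refine ⟨A₂, _, v, (hr₁.trans hr₂).mono (by omega), conn_of_center w fun a ha => ?_, hA₂,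
      ?_, by simp⟩
    · rw [Finset.mem_insert, Finset.mem_erase] at ha
      rcases ha with rfl | ⟨hau, haS⟩
      · exact ⟨.nil, by simp⟩
      · obtain ⟨p, hp⟩ := hpath a haS hau
        refine ⟨.cons hadj p, fun x hx => ?_⟩
        rw [SimpleGraph.Walk.support_cons, List.mem_cons] at hx
        rw [Finset.mem_insert, Finset.mem_erase]
        exact hx.imp id fun hx => ⟨(hp x hx).2, (hp x hx).1⟩
    · rw [Finset.card_insert_of_notMem (by simp [hw]), Finset.card_erase_of_mem huS]
      omega

/-- The caterpillar is led along a walk starting in it. -/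
theorem follow [Fintype V] {G : SimpleGraph V} (hG : G.IsAcyclic) {pb : P} {a t : V}
    (p : G.Walk a t) :
    ∀ (A : Config P H V) (S : Finset V) (z : V), Conn G S → Clear A pb S z →
      S.card = cT G + 1 → a ∈ S →
      ∃ (B : Config P H V) (S' : Finset V) (z' : V), Reach G A B (p.length * (5 * cT G)) ∧
        Conn G S' ∧ Clear B pb S' z' ∧ S'.card = cT G + 1 ∧ t ∈ S' := by
  induction p with
  | nil =>
    intro A S z hS hA hc ha
    exact ⟨A, S, z, Reach.refl G A _, hS, hA, hc, ha⟩
  | @cons a b t h q ih =>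
    intro A S z hS hA hc ha
    by_cases hb : b ∈ S
    · obtain ⟨B, S', z', hr, h'⟩ := ih A S z hS hA hc hb
      exact ⟨B, S', z', hr.mono (Nat.mul_le_mul_right _ (by simp)), h'⟩
    · obtain ⟨A₁, S₁, z₁, hr₁, hS₁, hA₁, hc₁, hb₁⟩ := advance hG hS hA hc ha hb h.symm
      obtain ⟨B, S', z', hr, h'⟩ := ih A₁ S₁ z₁ hS₁ hA₁ hc₁ hb₁
      refine ⟨B, S', z', (hr₁.trans hr).mono ?_, h'⟩
      rw [SimpleGraph.Walk.length_cons, Nat.add_mul]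
      omega

/-! ### Gathering the holes -/

/-- A walk ending outside `S` avoids `S` from its last visit to `S` on. -/
theorem last_exit {G : SimpleGraph V} (S : Finset V) {a t : V} (p : G.Walk a t) :
    t ∉ S → (∀ x ∈ p.support, x ∉ S) ∨
      ∃ w' ∈ S, ∃ (w : V) (q : G.Walk w t), G.Adj w' w ∧ ∀ x ∈ q.support, x ∉ S := by
  induction p with
  | nil => intro ht; left; simpa using ht
  | @cons a b t h q ih =>
    intro ht
    rcases ih ht with hq | hq
    · by_cases ha : a ∈ S
      · exact Or.inr ⟨a, ha, b, q, h, hq⟩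
      · left
        intro x hx
        rw [SimpleGraph.Walk.support_cons, List.mem_cons] at hx
        rcases hx with rfl | hx
        exacts [ha, hq x hx]
    · exact Or.inr hq

/-- A caterpillar with `k + 1` vertices is formed around the pebble by bringing `k` holes next to
it one after the other, each along a path that avoids the part already formed, so that the pebble
does not move. -/
theorem gather [Fintype V] [Fintype H] {G : SimpleGraph V} (hG : G.Connected)
    (A : Config P H V) (pb : P) :
    ∀ k, k ≤ Fintype.card H →
      ∃ (B : Config P H V) (S : Finset V) (z : V), Reach G A B (k * Fintype.card V) ∧
        Conn G S ∧ Clear B pb S z ∧ S.card = k + 1 := by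
  classical
  intro k
  induction k with
  | zero =>
    intro _
    refine ⟨A, {A (Sum.inl pb)}, A (Sum.inl pb), Reach.refl G A _, ?_, ?_, by simp⟩
    · exact conn_of_center (A (Sum.inl pb)) fun a ha => by
        obtain rfl := Finset.mem_singleton.1 ha
        exact ⟨.nil, by simp⟩
    · refine ⟨by simp, by simp, fun v hv hne => absurd (Finset.mem_singleton.1 hv) hne⟩
  | succ k ih =>
    intro hk
    obtain ⟨B, S, z, hr, hS, ⟨hz, hpb, hh⟩, hc⟩ := ih (by omega)
    -- `S` carries only `k` holes
    obtain ⟨h, hhS⟩ : ∃ h : H, B (Sum.inr h) ∉ S := by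
      by_contra! hno
      have hsub : Finset.univ.image (fun h : H => B (Sum.inr h)) ⊆ S.erase z := by
        intro x hx
        obtain ⟨h, -, rfl⟩ := Finset.mem_image.1 hx
        refine Finset.mem_erase.2 ⟨?_, hno h⟩
        rintro rfl
        simp at hpb
      have h1 := Finset.card_le_card hsub
      rw [Finset.card_image_of_injective _ (fun x y hxy => by simpa using hxy),
        Finset.card_erase_of_mem hz, Finset.card_univ] at h1
      omega
    obtain ⟨p⟩ := hG.preconnected z (B (Sum.inr h))
    rcases last_exit S p hhS with hp | ⟨w', hw', w, q, hadj, hq⟩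
    · exact absurd hz (hp z p.start_mem_support)
    have hq' : ∀ x ∈ q.bypass.support, x ∉ S :=
      fun x hx => hq x (q.support_bypass_subset_support hx)
    have hw : w ∉ S := hq w q.start_mem_support
    obtain ⟨D, hD, hDw, hDx⟩ := transport_hole q.bypass q.bypass_isPath B (by simp)
    have hDS : ∀ x ∈ S, D.symm x = B.symm x := fun x hx => hDx x fun h => hq' x h hx
    have hl := q.bypass_isPath.length_lt
    refine ⟨D, insert w S, z, (hr.trans hD).mono (by rw [Nat.add_mul]; omega), ?_,
      ⟨by simp [hz], by rw [hDS z hz, hpb], ?_⟩, by rw [Finset.card_insert_of_notMem hw, hc]⟩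
    · refine conn_of_center w' fun a ha => ?_
      rcases Finset.mem_insert.1 ha with rfl | ha
      · refine ⟨.cons hadj .nil, fun x hx => ?_⟩
        simp only [SimpleGraph.Walk.support_cons, SimpleGraph.Walk.support_nil, List.mem_cons,
          List.not_mem_nil, or_false] at hx
        rcases hx with rfl | rfl
        · exact Finset.mem_insert_of_mem hw'
        · exact Finset.mem_insert_self _ _
      · obtain ⟨p, hp⟩ := hS w' hw' a ha
        exact ⟨p, fun x hx => Finset.mem_insert_of_mem (hp x hx)⟩
    · intro v hv hvz
      rcases Finset.mem_insert.1 hv with rfl | hv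
      · exact hDw
      · rw [hDS v hv]
        exact hh v hv hvz

end PMT

/-- the CATERPILLAR algorithm: the motion planning problem on trees is always
solvable with at most `C·n·c(T)` moves, for a universal constant `C`. -/
theorem caterpillar :
    ∃ C : ℕ, 0 < C ∧
      ∀ (V P H : Type) [Fintype V] [Fintype P] [Fintype H] (G : SimpleGraph V),
        G.IsTree →
        Fintype.card V = Fintype.card P + Fintype.card H →
        PMT.cT G ≤ Fintype.card H →
        ∀ (A : PMT.Config P H V) (pb : P) (t : V),
          ∃ (f : List (V × V)) (B : PMT.Config P H V),
            PMT.applyPlan G A f = some B ∧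
            f.length ≤ C * Fintype.card V * PMT.cT G ∧
            B (Sum.inl pb) = t := by
  refine ⟨7, by norm_num, ?_⟩
  intro V P H _ _ _ G hG _ hH A pb t
  classical
  obtain ⟨A₁, S₁, z₁, hr₁, hS₁, hA₁, hc₁⟩ := PMT.gather hG.connected A pb (PMT.cT G) hH
  obtain ⟨p⟩ := hG.connected.preconnected z₁ t
  obtain ⟨A₂, S₂, z₂, hr₂, hS₂, hA₂, hc₂, ht⟩ :=
    PMT.follow hG.isAcyclic p.bypass A₁ S₁ z₁ hS₁ hA₁ hc₁ hA₁.1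
  obtain ⟨B, hr₃, hB⟩ := PMT.park hS₂ hA₂ ht
  obtain ⟨f, hf, hfl⟩ := (hr₁.trans hr₂).trans hr₃
  refine ⟨f, B, hf, hfl.trans ?_, ?_⟩
  · have hl := p.bypass_isPath.length_lt
    have h1 : p.bypass.length * (5 * PMT.cT G) ≤ Fintype.card V * (5 * PMT.cT G) :=
      Nat.mul_le_mul_right _ hl.le
    have h2 : 1 * PMT.cT G ≤ Fintype.card V * PMT.cT G :=
      Nat.mul_le_mul_right _ (by omega)
    rw [hc₂, Nat.add_sub_cancel]
    nlinarith
  · rw [← hB.2.1]; simp
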